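/- Let X ⊆ ℕ^d be a monotone set, and let A = (A_1,…,A_d) be a commuting d-tuple of bounded operators on a Hilbert space H with ∑_{j=1}^d ‖A_j h‖² ≤ r² ‖h‖² for all h ∈ H, for some 0 < r < 1, and defect operator D = (I − ∑_j A_j^* A_j)^{1/2}. Then the following are equivalent: (i) ∑_{n∈X} β(n) ‖D A^n h‖² = ‖h‖² for every h ∈ H (i.e. the map h ↦ (D A^n h)_{n∈X} is an isometry of H into the β-weighted ℓ² space of H-valued families over X); (ii) A^n = 0 for every n ∈ ℕ^d∖X. -/

import Mathlib

open scoped BigOperators ComplexConjugate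

noncomputable section

namespace DruryArveson

/-- Multi-indices. -/
abbrev Idx (d : ℕ) := Fin d → ℕ

/-- The weight `β(n) = |n|!/n!`. -/
def beta (d : ℕ) (n : Idx d) : ℝ :=
  ((∑ j, n j).factorial : ℝ) / ∏ j, ((n j).factorial : ℝ)

/-- standard basis multi-index `e_j`. -/
def e (d : ℕ) (j : Fin d) : Idx d := fun i => if i = j then 1 else 0

/-- A set `X ⊆ ℕ^d` is monotone if its complement is shift invariant. -/
def MonotoneSet (d : ℕ) (X : Set (Idx d)) : Prop :=
  ∀ n, n ∉ X → ∀ j, n + e d j ∉ X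

/-- membership in the Drury–Arveson space (coefficientwise). -/
def MemHd (d : ℕ) (a : Idx d → ℂ) : Prop :=
  Summable fun n => ‖a n‖ ^ 2 / beta d n

/-- the Drury–Arveson norm. -/
def hdNorm (d : ℕ) (a : Idx d → ℂ) : ℝ :=
  Real.sqrt (∑' n, ‖a n‖ ^ 2 / beta d n)

/-- the Drury–Arveson inner product. -/
def hdInner (d : ℕ) (a b : Idx d → ℂ) : ℂ :=
  ∑' n, a n * conj (b n) / (beta d n : ℂ)

/-- membership in `H_d(X)`. -/
def MemHdX (d : ℕ) (X : Set (Idx d)) (a : Idx d → ℂ) : Prop :=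
  (∀ n ∉ X, a n = 0) ∧ MemHd d a

/-- membership in `ℓ²(X, β)`. -/
def MemL2 (d : ℕ) (X : Set (Idx d)) (g : Idx d → ℂ) : Prop :=
  (∀ n ∉ X, g n = 0) ∧ Summable fun n => ‖g n‖ ^ 2 * beta d n

/-- the norm of `ℓ²(ℕ^d, β)`. -/
def l2Norm (d : ℕ) (g : Idx d → ℂ) : ℝ :=
  Real.sqrt (∑' n, ‖g n‖ ^ 2 * beta d n)

/-- the inner product of `ℓ²(ℕ^d, β)`. -/
def l2Inner (d : ℕ) (g h : Idx d → ℂ) : ℂ :=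
  ∑' n, g n * conj (h n) * (beta d n : ℂ)

/-- the compressed backshift `B_j^X = P_X B_j|_{ℓ²(X,β)}`. -/
def BXop (d : ℕ) (X : Set (Idx d)) (j : Fin d) (g : Idx d → ℂ) : Idx d → ℂ :=
  X.indicator fun n => g (n + e d j)

/-- ordered power `(T_1)^{k_1} ∘ ⋯ ∘ (T_d)^{k_d}` of a `d`-tuple of maps. -/
def opPow (d : ℕ) {α : Type*} (T : Fin d → (α → α)) (k : Idx d) : α → α :=
  (List.ofFn fun j => (T j)^[k j]).foldr (· ∘ ·) id

/-- multiplication by `z_j` on coefficients. -/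
def Mop (d : ℕ) (j : Fin d) (a : Idx d → ℂ) : Idx d → ℂ :=
  fun n => if 0 < n j then a (n - e d j) else 0

/-- the compressed multiplication `M_j^X = P_X M_j|_{H_d(X)}`. -/
def MopX (d : ℕ) (X : Set (Idx d)) (j : Fin d) (a : Idx d → ℂ) : Idx d → ℂ :=
  X.indicator (Mop d j a)

/-- the Taylor coefficients of a polynomial of `d` variables. -/
def Qhat (d : ℕ) (Q : MvPolynomial (Fin d) ℂ) (n : Idx d) : ℂ :=
  Q.coeff (Finsupp.equivFunOnFinite.symm n)

/-- `Q(T)` for a `d`-tuple of maps on the coefficient space. -/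
def polyOp (d : ℕ) (Q : MvPolynomial (Fin d) ℂ)
    (T : Fin d → ((Idx d → ℂ) → (Idx d → ℂ))) (a : Idx d → ℂ) : Idx d → ℂ :=
  fun n => ∑ k ∈ Q.support, Q.coeff k * opPow d T (⇑k) a n

/-- operator norm of a map with respect to the `ℓ²(X,β)` norm. -/
def opNormL2 (d : ℕ) (X : Set (Idx d)) (T : (Idx d → ℂ) → (Idx d → ℂ)) : ℝ :=
  sInf {C | 0 ≤ C ∧ ∀ g, MemL2 d X g → l2Norm d (T g) ≤ C * l2Norm d g}

/-- operator norm of a map with respect to the `H_d(X)` norm. -/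
def opNormHdX (d : ℕ) (X : Set (Idx d)) (T : (Idx d → ℂ) → (Idx d → ℂ)) : ℝ :=
  sInf {C | 0 ≤ C ∧ ∀ a, MemHdX d X a → hdNorm d (T a) ≤ C * hdNorm d a}

/-- coefficients of the product `φ · f` of two power series. -/
def mconv (d : ℕ) (φ a : Idx d → ℂ) (m : Idx d) : ℂ :=
  ∑ k ∈ Finset.Iic m, φ k * a (m - k)

/-- `φ` is a multiplier of `H_d`. -/
def IsMultiplier (d : ℕ) (φ : Idx d → ℂ) : Prop :=
  ∀ a, MemHd d a → MemHd d (mconv d φ a)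

/-- the multiplier norm `‖φ‖_{M(H_d)}`. -/
def multNorm (d : ℕ) (φ : Idx d → ℂ) : ℝ :=
  sInf {C | 0 ≤ C ∧ ∀ a, MemHd d a → hdNorm d (mconv d φ a) ≤ C * hdNorm d a}

/-- `A^n = A_1^{n_1} ⋯ A_d^{n_d}` for a tuple of bounded operators. -/
def ApowCLM (d : ℕ) {H : Type*} [NormedAddCommGroup H] [NormedSpace ℂ H]
    (A : Fin d → H →L[ℂ] H) (n : Idx d) : H →L[ℂ] H :=
  (List.ofFn fun j => A j ^ n j).prod

/-- `Q(A) = ∑ c_k A^k` for a tuple of bounded operators. -/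
def QevalCLM (d : ℕ) {H : Type*} [NormedAddCommGroup H] [NormedSpace ℂ H]
    (A : Fin d → H →L[ℂ] H) (Q : MvPolynomial (Fin d) ℂ) : H →L[ℂ] H :=
  ∑ k ∈ Q.support, Q.coeff k • ApowCLM d A ⇑k

/-- monomial `z^n`. -/
def mpow (d : ℕ) (z : Fin d → ℂ) (n : Idx d) : ℂ := ∏ j, z j ^ n j


lemma prod_ofFn_add_e {M : Type*} [Monoid M] (d : ℕ) (A : Fin d → M)
    (hc : ∀ i j, A i * A j = A j * A i) (n : Idx d) (i : Fin d) :
    (List.ofFn fun j => A j ^ (n + e d i) j).prod = A i * (List.ofFn fun j => A j ^ n j).prod := by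
  induction d with
  | zero => exact i.elim0
  | succ d ih =>
    rw [List.ofFn_succ, List.ofFn_succ, List.prod_cons, List.prod_cons]
    refine Fin.cases ?_ (fun i => ?_) i
    · have h0 : (n + e (d + 1) 0) 0 = n 0 + 1 := by simp [e]
      have h1 : ∀ j : Fin d, (n + e (d + 1) 0) j.succ = n j.succ := by
        intro j; simp [e]
      simp only [h0, h1, pow_succ', mul_assoc]
    · have h0 : (n + e (d + 1) i.succ) 0 = n 0 := by simp [e, (Fin.succ_ne_zero i).symm]
      have h1 : ∀ j : Fin d, (n + e (d + 1) i.succ) j.succ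
          = ((fun j : Fin d => n j.succ) + e d i) j := by
        intro j; simp [e]
      simp only [h0, h1]
      rw [ih (fun j => A j.succ) (fun i j => hc _ _) (fun j => n j.succ) i]
      have hcm : Commute (A i.succ) (A 0 ^ n 0) :=
        Commute.pow_right (hc _ _) _
      rw [← mul_assoc, ← mul_assoc, hcm.eq]

lemma beta_eq (d : ℕ) (n : Idx d) : beta d n = (Nat.multinomial Finset.univ n : ℝ) := by
  unfold beta
  rw [← Nat.multinomial_spec Finset.univ n]
  push_cast
  have : (∏ j, ((n j).factorial : ℝ)) ≠ 0 :=
    Finset.prod_ne_zero_iff.mpr fun j _ => by positivity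
  field_simp

/-- level sets -/
def lev (d k : ℕ) : Finset (Idx d) := Finset.piAntidiag Finset.univ k

lemma mem_lev {d k : ℕ} {n : Idx d} : n ∈ lev d k ↔ ∑ j, n j = k := by
  simp [lev]

/-- The multinomial recursion, tested against an arbitrary function. -/
lemma level_sum (d k : ℕ) (φ : Idx d → ℝ) :
    ∑ n ∈ lev d (k + 1), beta d n * φ n
      = ∑ n ∈ lev d k, beta d n * ∑ j, φ (n + e d j) := by
  let L : MvPolynomial (Fin d) ℝ →ₗ[ℝ] ℝ :=
    (MvPolynomial.basisMonomials (Fin d) ℝ).constr ℝ (fun m => φ ⇑m)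
  have hmon : ∀ n : Idx d, (∏ i, (MvPolynomial.X i : MvPolynomial (Fin d) ℝ) ^ n i)
      = MvPolynomial.monomial (Finsupp.equivFunOnFinite.symm n) 1 := by
    intro n
    rw [MvPolynomial.monomial_eq, Finsupp.prod_fintype _ _ (by simp)]
    simp
  have hL : ∀ n : Idx d, L (∏ i, (MvPolynomial.X i : MvPolynomial (Fin d) ℝ) ^ n i) = φ n := by
    intro n
    have hb := (MvPolynomial.basisMonomials (Fin d) ℝ).constr_basis ℝ
      (fun m : Fin d →₀ ℕ => φ ⇑m) (Finsupp.equivFunOnFinite.symm n)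
    rw [MvPolynomial.coe_basisMonomials] at hb
    rw [hmon]
    exact hb
  have hsmul : ∀ (n : Idx d) (p : MvPolynomial (Fin d) ℝ),
      (Nat.multinomial Finset.univ n : MvPolynomial (Fin d) ℝ) * p = beta d n • p := by
    intro n p
    rw [beta_eq, MvPolynomial.smul_eq_C_mul]
    simp
  have hpow : ∀ k, (∑ i, (MvPolynomial.X i : MvPolynomial (Fin d) ℝ)) ^ k
      = ∑ n ∈ lev d k, beta d n • ∏ i, (MvPolynomial.X i : MvPolynomial (Fin d) ℝ) ^ n i := by
    intro k
    rw [Finset.sum_pow_eq_sum_piAntidiag]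
    exact Finset.sum_congr rfl fun n _ => hsmul n _
  have hstep : ∀ (n : Idx d) (j : Fin d),
      (∏ i, (MvPolynomial.X i : MvPolynomial (Fin d) ℝ) ^ n i) * MvPolynomial.X j
        = ∏ i, (MvPolynomial.X i : MvPolynomial (Fin d) ℝ) ^ (n + e d j) i := by
    intro n j
    simp only [e, Pi.add_apply, pow_add, Finset.prod_mul_distrib]
    congr 1
    simp [pow_ite]
  have h1 := congrArg L (hpow (k + 1))
  have h2 := congrArg L (show (∑ i, (MvPolynomial.X i : MvPolynomial (Fin d) ℝ)) ^ (k + 1)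
      = ∑ n ∈ lev d k, beta d n •
        ∑ j, ∏ i, (MvPolynomial.X i : MvPolynomial (Fin d) ℝ) ^ (n + e d j) i by
    rw [pow_succ, hpow k, Finset.sum_mul]
    refine Finset.sum_congr rfl fun n _ => ?_
    rw [smul_mul_assoc, Finset.mul_sum]
    simp only [hstep])
  rw [h1] at h2
  simpa only [map_sum, map_smul, hL, smul_eq_mul] using h2

lemma beta_pos (d : ℕ) (n : Idx d) : 0 < beta d n := by
  rw [beta_eq]
  exact_mod_cast Nat.multinomial_pos _ _

lemma hasSum_of_levels (d : ℕ) (g : Idx d → ℝ) (hg : ∀ n, 0 ≤ g n) (S : ℕ → ℝ)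
    (hS0 : ∀ k, 0 ≤ S k) (hS : ∀ k, ∑ n ∈ lev d k, g n = S k - S (k + 1))
    (hlim : Filter.Tendsto S Filter.atTop (nhds 0)) : HasSum g (S 0) := by
  classical
  let B : ℕ → Finset (Idx d) := fun N => (Finset.range N).biUnion (lev d)
  have hB : ∀ N, ∑ n ∈ B N, g n = S 0 - S N := by
    intro N
    rw [Finset.sum_biUnion]
    · simp only [hS]
      exact Finset.sum_range_sub' S N
    · intro a _ b _ hab
      refine Finset.disjoint_left.mpr fun n hn hn' => hab ?_
      rw [mem_lev] at hn hn'
      omega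
  have hmem : ∀ n N, n ∈ B N ↔ ∑ j, n j < N := by
    intro n N
    simp [B, mem_lev]
  have hmono : Monotone B := by
    intro a b hab n hn
    rw [hmem] at *
    omega
  have ht : Filter.Tendsto B Filter.atTop Filter.atTop :=
    Filter.tendsto_atTop_finset_of_monotone hmono
      fun n => ⟨∑ j, n j + 1, (hmem _ _).2 (Nat.lt_succ_self _)⟩
  have hsum : Summable g := by
    refine summable_of_sum_le (c := S 0) hg fun u => ?_
    obtain ⟨N, hN⟩ := (ht.eventually (Filter.eventually_ge_atTop u)).exists
    calc ∑ n ∈ u, g n ≤ ∑ n ∈ B N, g n :=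
          Finset.sum_le_sum_of_subset_of_nonneg hN fun n _ _ => hg n
      _ = S 0 - S N := hB N
      _ ≤ S 0 := by linarith [hS0 N]
  have h1 := hsum.hasSum.comp ht
  have h2 : Filter.Tendsto (fun N => ∑ n ∈ B N, g n) Filter.atTop (nhds (S 0)) := by
    simp only [hB]
    simpa using hlim.const_sub (S 0)
  have := tendsto_nhds_unique h1 h2
  rw [← this]
  exact hsum.hasSum

lemma defect_norm (d : ℕ)
    {H : Type*} [NormedAddCommGroup H] [InnerProductSpace ℂ H] [CompleteSpace H]
    (A : Fin d → H →L[ℂ] H)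
    (D : H →L[ℂ] H) (hDpos : D.IsPositive)
    (hDsq : D ∘L D = 1 - ∑ j, (ContinuousLinearMap.adjoint (A j)) ∘L A j) (h : H) :
    ‖D h‖ ^ 2 = ‖h‖ ^ 2 - ∑ j, ‖A j h‖ ^ 2 := by
  have h1 : inner ℂ (D h) (D h) = inner ℂ ((D ∘L D) h) h := by
    rw [ContinuousLinearMap.comp_apply]
    conv_rhs => rw [← ContinuousLinearMap.adjoint_inner_right]
    rw [hDpos.isSelfAdjoint.adjoint_eq]
  rw [hDsq] at h1
  simp only [ContinuousLinearMap.sub_apply, ContinuousLinearMap.sum_apply,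
    ContinuousLinearMap.comp_apply, inner_sub_left, sum_inner,
    ContinuousLinearMap.adjoint_inner_left, ContinuousLinearMap.one_apply,
    inner_self_eq_norm_sq_to_K] at h1
  exact_mod_cast h1

lemma total_sum (d : ℕ)
    {H : Type*} [NormedAddCommGroup H] [InnerProductSpace ℂ H] [CompleteSpace H]
    (A : Fin d → H →L[ℂ] H)
    (hcomm : ∀ i j, A i ∘L A j = A j ∘L A i)
    (r : ℝ) (hr0 : 0 < r) (hr1 : r < 1)
    (hrow : ∀ h : H, ∑ j, ‖A j h‖ ^ 2 ≤ r ^ 2 * ‖h‖ ^ 2)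
    (D : H →L[ℂ] H) (hDpos : D.IsPositive)
    (hDsq : D ∘L D = 1 - ∑ j, (ContinuousLinearMap.adjoint (A j)) ∘L A j) (h : H) :
    HasSum (fun n : Idx d => beta d n * ‖D (ApowCLM d A n h)‖ ^ 2) (‖h‖ ^ 2) := by
  have hA : ∀ n j, ApowCLM d A (n + e d j) h = A j (ApowCLM d A n h) := by
    intro n j
    unfold ApowCLM
    rw [prod_ofFn_add_e d A hcomm n j]
    rfl
  let S : ℕ → ℝ := fun k => ∑ n ∈ lev d k, beta d n * ‖ApowCLM d A n h‖ ^ 2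
  have hnn : ∀ k, 0 ≤ S k := fun k => Finset.sum_nonneg fun n _ =>
    mul_nonneg (beta_pos d n).le (sq_nonneg _)
  have hSucc : ∀ k, S (k + 1)
      = ∑ n ∈ lev d k, beta d n * ∑ j, ‖A j (ApowCLM d A n h)‖ ^ 2 := by
    intro k
    have := level_sum d k (fun n => ‖ApowCLM d A n h‖ ^ 2)
    simp only [hA] at this
    exact this
  have hS0 : S 0 = ‖h‖ ^ 2 := by
    have : lev d 0 = {0} := by simp [lev]
    simp only [S, this, Finset.sum_singleton]
    simp [beta, ApowCLM, List.ofFn_const]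
  have hle : ∀ k, S (k + 1) ≤ r ^ 2 * S k := by
    intro k
    rw [hSucc, Finset.mul_sum]
    refine Finset.sum_le_sum fun n _ => ?_
    have := mul_le_mul_of_nonneg_left (hrow (ApowCLM d A n h)) (beta_pos d n).le
    linarith
  have hgeo : ∀ k, S k ≤ (r ^ 2) ^ k * S 0 := by
    intro k
    induction k with
    | zero => simp
    | succ k ih =>
      calc S (k + 1) ≤ r ^ 2 * S k := hle k
        _ ≤ r ^ 2 * ((r ^ 2) ^ k * S 0) := mul_le_mul_of_nonneg_left ih (sq_nonneg r)
        _ = _ := by ring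
  have hlim : Filter.Tendsto S Filter.atTop (nhds 0) := by
    refine squeeze_zero hnn hgeo ?_
    have := (tendsto_pow_atTop_nhds_zero_of_lt_one (sq_nonneg r)
      (show r ^ 2 < 1 by nlinarith)).mul_const (S 0)
    simpa using this
  rw [← hS0]
  refine hasSum_of_levels d _ (fun n => mul_nonneg (beta_pos d n).le (sq_nonneg _)) S hnn ?_ hlim
  intro k
  rw [hSucc, ← Finset.sum_sub_distrib]
  refine Finset.sum_congr rfl fun n _ => ?_
  rw [defect_norm d A D hDpos hDsq]
  ring

/-- Let `X ⊆ ℕ^d` be monotone and `A` a commuting `d`-tuple of bounded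
operators on a complex Hilbert space `H` with `∑_j ‖A_j h‖² ≤ r² ‖h‖²` for some
`0 < r < 1`, with defect operator `D = (I - ∑_j A_j^* A_j)^{1/2}`.  Then
`h ↦ (D A^n h)_{n ∈ X}` is an isometry into the β-weighted `ℓ²` space of `H`-valued
families over `X` (i.e. `∑_{n ∈ X} β(n) ‖D A^n h‖² = ‖h‖²` for all `h`) if and only if
`A^n = 0` for every `n ∈ ℕ^d ∖ X`. -/
theorem defect_isometry_iff_vanishing (d : ℕ) (X : Set (Idx d)) (hX : MonotoneSet d X)
    {H : Type*} [NormedAddCommGroup H] [InnerProductSpace ℂ H] [CompleteSpace H]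
    (A : Fin d → H →L[ℂ] H)
    (hcomm : ∀ i j, A i ∘L A j = A j ∘L A i)
    (r : ℝ) (hr0 : 0 < r) (hr1 : r < 1)
    (hrow : ∀ h : H, ∑ j, ‖A j h‖ ^ 2 ≤ r ^ 2 * ‖h‖ ^ 2)
    (D : H →L[ℂ] H) (hDpos : D.IsPositive)
    (hDsq : D ∘L D = 1 - ∑ j, (ContinuousLinearMap.adjoint (A j)) ∘L A j) :
    (∀ h : H, HasSum (fun n : X => beta d n * ‖D (ApowCLM d A n h)‖ ^ 2) (‖h‖ ^ 2)) ↔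
    (∀ n ∉ X, ApowCLM d A n = 0) := by
  have htot := total_sum d A hcomm r hr0 hr1 hrow D hDpos hDsq
  constructor
  · intro hi n hn
    ext h
    have h1 := (htot h)
    have h2 : HasSum (fun n : (Xᶜ : Set (Idx d)) => beta d n * ‖D (ApowCLM d A n h)‖ ^ 2) 0 := by
      have h3 := (h1.summable.subtype Xᶜ).hasSum
      have h4 := ((hi h).add_isCompl isCompl_compl h3).unique h1
      rw [add_eq_left] at h4
      rw [h4] at h3
      exact h3
    have h3 := (hasSum_zero_iff_of_nonneg
      (fun n => mul_nonneg (beta_pos d _).le (sq_nonneg _))).1 h2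
    have h4 := congrFun h3 ⟨n, hn⟩
    simp only [Pi.zero_apply, mul_eq_zero, (beta_pos d n).ne', false_or] at h4
    have h5 := defect_norm d A D hDpos hDsq (ApowCLM d A n h)
    rw [h4] at h5
    have h6 := hrow (ApowCLM d A n h)
    have h7 : ‖ApowCLM d A n h‖ ^ 2 = 0 := by
      have : r ^ 2 < 1 := by nlinarith
      nlinarith [sq_nonneg ‖ApowCLM d A n h‖]
    simpa using h7
  · intro hz h
    have := htot h
    refine (hasSum_subtype_iff_of_support_subset
      (f := fun n : Idx d => beta d n * ‖D (ApowCLM d A n h)‖ ^ 2) ?_).2 this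
    intro n hn
    by_contra hx
    exact hn (by simp [hz n hx])

end DruryArveson
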